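/- The sequence of quotients γ(d+1)/γ(d), indexed by integers d ≥ 2, converges to 2/e as d → ∞, where γ(d) = 2^{d-2} · d² · Γ(d/2)² / (j_{d/2-1, 1})^d and e is Euler's number. -/

import Mathlib

/-- The Bessel function of the first kind `J_ν`, defined for real order `ν`
by its power series (interpreted with real powers `(x/2)^(2k+ν)`). -/
noncomputable def besselJ (ν x : ℝ) : ℝ :=
  ∑' k : ℕ, (-1 : ℝ) ^ k / (k.factorial * Real.Gamma ((k : ℝ) + ν + 1)) *
    (x / 2) ^ (2 * (k : ℝ) + ν)

/-- `j_{ν,1}`: the smallest positive zero of the Bessel function `J_ν`. -/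
noncomputable def besselJZero1 (ν : ℝ) : ℝ := sInf {r : ℝ | 0 < r ∧ besselJ ν r = 0}

/-- The Pleijel constant `γ(d) = 2^{d-2} d² Γ(d/2)² / (j_{d/2-1,1})^d`. -/
noncomputable def pleijelGamma (d : ℕ) : ℝ :=
  2 ^ ((d : ℝ) - 2) * (d : ℝ) ^ 2 * Real.Gamma ((d : ℝ) / 2) ^ 2 /
    besselJZero1 ((d : ℝ) / 2 - 1) ^ (d : ℝ)

/-!
The function `x ↦ J_ν(jx)` with `j = j_{ν,1}` solves `(x d/dx)² f = (ν² - j²x²) f` on `(0, 1)`, is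
positive there and vanishes at both ends, so it behaves like the ground state of a Schrödinger
operator with eigenvalue `-ν²`. Comparing the weighted geometric mean of two such functions with
a third one shows that `j²` is a concave function of `ν²`, just as a lowest eigenvalue is concave
in a parameter on which the operator depends linearly. Since `j ∼ ν` (Sturm comparison with a sine
of `log x`), concavity upgrades this to the slopes of `j²` against `ν²`, which tend to `1`; hence
`j_{ν+1/2,1} - j_{ν,1} → 1/2` and `(j_{ν,1} / j_{ν+1/2,1})^{2ν+2} → 1/e`. The remaining factors
of the quotient are elementary except for `Γ(x + 1/2) / Γ(x) ∼ √x`, which is Wendel's inequality.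
-/

open Filter Set Topology Real

/-! ### Slopes of concave functions -/

lemma tendsto_slope_atTop_of_tendsto_div {φ : ℝ → ℝ} {L : ℝ}
    (hφ : Tendsto (fun t => φ t / t) atTop (𝓝 L)) (s : ℝ) :
    Tendsto (slope φ s) atTop (𝓝 L) := by
  have hlim := (hφ.sub (tendsto_id.const_div_atTop (φ s))).div
    ((tendsto_id.const_div_atTop s).const_sub 1) (by norm_num)
  rw [sub_zero, sub_zero, div_one] at hlim
  refine hlim.congr' ?_
  filter_upwards [eventually_gt_atTop 0] with t ht
  rw [slope_def_field, Pi.div_apply, id, ← sub_div, one_sub_div ht.ne',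
    div_div_div_cancel_right₀ ht.ne']

lemma tendsto_slope_of_concaveOn {ι : Type*} {l : Filter ι} {φ : ℝ → ℝ} {c L : ℝ}
    (hconc : ConcaveOn ℝ (Ioi c) φ) (hφ : Tendsto (fun t => φ t / t) atTop (𝓝 L)) {s t : ι → ℝ}
    (hs : Tendsto s l atTop) (hst : ∀ᶠ i in l, s i < t i) :
    Tendsto (fun i => slope φ (s i) (t i)) l (𝓝 L) := by
  have hupper := (tendsto_slope_atTop_of_tendsto_div hφ (c + 1)).comp hs
  refine tendsto_of_tendsto_of_tendsto_of_le_of_le' tendsto_const_nhds hupper ?_ ?_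
  all_goals filter_upwards [hst, hs.eventually_gt_atTop (c + 1)] with i hst hs
  · have hsc : s i ∈ Ioi c := (lt_add_one c).trans hs
    refine le_of_tendsto (tendsto_slope_atTop_of_tendsto_div hφ (s i)) ?_
    filter_upwards [eventually_ge_atTop (t i)] with u hu
    exact hconc.antitoneOn_slope_gt hsc ⟨hsc.trans hst, hst⟩
      ⟨hsc.trans (hst.trans_le hu), hst.trans_le hu⟩ hu
  · simp only [slope_def_field, Function.comp_apply]
    exact hconc.slope_anti_adjacent (lt_add_one c) ((lt_add_one c).trans (hs.trans hst)) hs hst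

/-! ### Wendel's inequality -/

lemma tendsto_add_div_add_atTop (a b : ℝ) :
    Tendsto (fun x => (x + a) / (x + b)) atTop (𝓝 1) := by
  have hshift : Tendsto (fun x => x + b) atTop atTop :=
    tendsto_atTop_add_const_right _ b tendsto_id
  have hlim := (hshift.const_div_atTop (a - b)).const_add 1
  rw [add_zero] at hlim
  refine hlim.congr' ?_
  filter_upwards [hshift.eventually_ne_atTop 0] with x hx
  rw [one_add_div hx, add_add_sub_cancel]

lemma Gamma_add_le_rpow_mul_Gamma {x s : ℝ} (hx : 0 < x) (hs : s ∈ Icc 0 1) :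
    Gamma (x + s) ≤ x ^ s * Gamma x := by
  rcases hs.1.eq_or_lt with rfl | hs0
  · simp
  rcases hs.2.eq_or_lt with rfl | hs1
  · simp [Gamma_add_one hx.ne']
  have hΓ := Gamma_pos_of_pos hx
  calc Gamma (x + s) = Gamma ((1 - s) * x + s * (x + 1)) := by ring_nf
    _ ≤ Gamma x ^ (1 - s) * Gamma (x + 1) ^ s :=
      Gamma_mul_add_mul_le_rpow_Gamma_mul_rpow_Gamma hx (by positivity) (by linarith) hs0
        (sub_add_cancel 1 s)
    _ = x ^ s * (Gamma x ^ (1 - s) * Gamma x ^ s) := by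
      rw [Gamma_add_one hx.ne', mul_rpow hx.le hΓ.le, mul_left_comm]
    _ = x ^ s * Gamma x := by rw [← rpow_add hΓ, sub_add_cancel, rpow_one]

lemma rpow_div_add_le_Gamma_add_div {x s : ℝ} (hx : 0 < x) (hs : s ∈ Icc 0 1) :
    (x / (x + s)) ^ (1 - s) ≤ Gamma (x + s) / (x ^ s * Gamma x) := by
  have := Gamma_pos_of_pos hx
  have hxs : 0 < x + s := add_pos_of_pos_of_nonneg hx hs.1
  rw [div_rpow hx.le hxs.le, div_le_div_iff₀ (by positivity) (by positivity)]
  calc x ^ (1 - s) * (x ^ s * Gamma x) = Gamma (x + s + (1 - s)) := by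
        rw [← mul_assoc, ← rpow_add hx, sub_add_cancel, rpow_one, add_add_sub_cancel,
          Gamma_add_one hx.ne']
    _ ≤ (x + s) ^ (1 - s) * Gamma (x + s) :=
      Gamma_add_le_rpow_mul_Gamma hxs ⟨sub_nonneg.2 hs.2, sub_le_self 1 hs.1⟩
    _ = Gamma (x + s) * (x + s) ^ (1 - s) := mul_comm _ _

lemma tendsto_Gamma_add_div_rpow_mul_Gamma {s : ℝ} (hs : s ∈ Icc 0 1) :
    Tendsto (fun x => Gamma (x + s) / (x ^ s * Gamma x)) atTop (𝓝 1) := by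
  have hratio : Tendsto (fun x => x / (x + s)) atTop (𝓝 1) := by
    simpa only [add_zero] using tendsto_add_div_add_atTop 0 s
  have hlower := hratio.rpow_const (p := 1 - s) (.inl one_ne_zero)
  rw [one_rpow] at hlower
  refine tendsto_of_tendsto_of_tendsto_of_le_of_le' hlower tendsto_const_nhds ?_ ?_
  all_goals filter_upwards [eventually_gt_atTop 0] with x hx
  · exact rpow_div_add_le_Gamma_add_div hx hs
  · exact div_le_one_of_le₀ (Gamma_add_le_rpow_mul_Gamma hx hs)
      (mul_pos (rpow_pos_of_pos hx s) (Gamma_pos_of_pos hx)).le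

/-! ### The Bessel–Clifford function -/

/-- The Bessel–Clifford function, the entire function for which
`J_ν(x) = (x/2)^ν * besselClifford ν (-x²/4)`. For negative integers `ν` the terms with
`k ≤ -ν - 1` vanish, as they should, since `Gamma` is `0` at its poles. -/
noncomputable def besselClifford (ν z : ℝ) : ℝ :=
  ∑' k : ℕ, z ^ k / (k.factorial * Gamma (k + ν + 1))

lemma inv_Gamma_eq_self_mul_inv_Gamma_add_one (s : ℝ) : (Gamma s)⁻¹ = s * (Gamma (s + 1))⁻¹ := by
  rcases eq_or_ne s 0 with rfl | hs
  · simp only [Gamma_zero, inv_zero, zero_mul]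
  · rw [Gamma_add_one hs, mul_inv, mul_inv_cancel_left₀ hs]

lemma exists_abs_inv_Gamma_natCast_add_le (s : ℝ) : ∃ C, ∀ k : ℕ, |(Gamma (k + s))⁻¹| ≤ C := by
  have hle : ∀ᶠ k : ℕ in atTop, |(Gamma (k + s))⁻¹| ≤ 1 := by
    filter_upwards [tendsto_natCast_atTop_atTop.eventually_ge_atTop (2 - s)] with k hk
    have h2 : 2 ≤ k + s := by linarith
    have h1 : 1 ≤ Gamma (k + s) :=
      Gamma_two.symm.trans_le (Gamma_strictMonoOn_Ici.monotoneOn self_mem_Ici h2 h2)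
    rw [abs_of_pos (by positivity)]
    exact inv_le_one_of_one_le₀ h1
  obtain ⟨C, hC⟩ := (isBoundedUnder_of_eventually_le hle).bddAbove_range
  exact ⟨C, fun k => hC (mem_range_self k)⟩

lemma summable_besselClifford (ν z : ℝ) :
    Summable fun k : ℕ => z ^ k / (k.factorial * Gamma (k + ν + 1)) := by
  obtain ⟨C, hC⟩ := exists_abs_inv_Gamma_natCast_add_le (ν + 1)
  refine .of_norm_bounded ((summable_pow_div_factorial |z|).mul_right C) fun k => ?_
  rw [norm_eq_abs, ← div_div, div_eq_mul_inv _ (Gamma _), abs_mul, abs_div, abs_pow, Nat.abs_cast,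
    add_assoc]
  gcongr
  exact hC k

lemma natCast_add_one_mul_div_factorial_succ (k : ℕ) (x : ℝ) :
    (k + 1 : ℕ) * x / (k + 1).factorial = x / k.factorial := by
  rw [Nat.factorial_succ, Nat.cast_mul]
  exact mul_div_mul_left _ _ (by positivity)

lemma natCast_add_one_mul_div_factorial_succ_mul_Gamma (ν x : ℝ) (k : ℕ) :
    (k + 1 : ℕ) * x / ((k + 1).factorial * Gamma ((k + 1 : ℕ) + ν + 1)) =
      x / (k.factorial * Gamma (k + (ν + 1) + 1)) := by
  rw [← div_div, natCast_add_one_mul_div_factorial_succ, div_div, Nat.cast_succ,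
    add_right_comm _ 1 ν, add_assoc _ ν 1]

lemma besselClifford_zero (ν : ℝ) : besselClifford ν 0 = (Gamma (ν + 1))⁻¹ := by
  rw [besselClifford, tsum_eq_single 0 fun k hk => by rw [zero_pow hk, zero_div]]
  simp

lemma hasDerivAt_besselClifford (ν z : ℝ) :
    HasDerivAt (besselClifford ν) (besselClifford (ν + 1) z) z := by
  obtain ⟨C, hC⟩ := exists_abs_inv_Gamma_natCast_add_le (ν + 1)
  have hz : z ∈ Metric.ball (0 : ℝ) (|z| + 1) := by simp
  have hbound : Summable fun k : ℕ => k * (|z| + 1) ^ (k - 1) / k.factorial * C := by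
    refine ((summable_nat_add_iff 1).1 ?_).mul_right C
    simpa only [natCast_add_one_mul_div_factorial_succ, add_tsub_cancel_right] using
      summable_pow_div_factorial (|z| + 1)
  have hderiv : HasDerivAt (besselClifford ν)
      (∑' k : ℕ, k * z ^ (k - 1) / (k.factorial * Gamma (k + ν + 1))) z := by
    refine hasDerivAt_tsum_of_isPreconnected hbound Metric.isOpen_ball
      (convex_ball _ _).isPreconnected (fun k y _ => (hasDerivAt_pow k y).div_const _)
      (fun k y hy => ?_) hz (summable_besselClifford ν z) hz
    have hy : |y| ≤ |z| + 1 := by simpa using (Metric.mem_ball.1 hy).le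
    rw [norm_eq_abs, ← div_div, div_eq_mul_inv _ (Gamma _), abs_mul, abs_div, abs_mul, abs_pow,
      Nat.abs_cast, Nat.abs_cast, add_assoc]
    gcongr
    exact hC k
  have hshift : ∀ k : ℕ, (k + 1 : ℕ) * z ^ (k + 1 - 1) /
      ((k + 1).factorial * Gamma ((k + 1 : ℕ) + ν + 1)) =
      z ^ k / (k.factorial * Gamma (k + (ν + 1) + 1)) := fun k => by
    rw [add_tsub_cancel_right, natCast_add_one_mul_div_factorial_succ_mul_Gamma]
  refine hderiv.congr_deriv ?_
  rw [tsum_eq_zero_add' ((summable_besselClifford (ν + 1) z).congr fun k => (hshift k).symm),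
    Nat.cast_zero, zero_mul, zero_div, zero_add]
  exact tsum_congr hshift

lemma hasSum_natCast_mul_besselClifford (ν z : ℝ) :
    HasSum (fun k : ℕ => k * z ^ k / (k.factorial * Gamma (k + ν + 1)))
      (z * besselClifford (ν + 1) z) := by
  refine (hasSum_nat_add_iff' 1).1 ?_
  rw [Finset.sum_range_one, Nat.cast_zero, zero_mul, zero_div, sub_zero]
  refine ((summable_besselClifford (ν + 1) z).hasSum.mul_left z).congr_fun fun k => ?_
  rw [natCast_add_one_mul_div_factorial_succ_mul_Gamma, pow_succ', mul_div_assoc]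

lemma besselClifford_eq_add (ν z : ℝ) :
    besselClifford ν z = (ν + 1) * besselClifford (ν + 1) z + z * besselClifford (ν + 2) z := by
  have hterm : ∀ k : ℕ, z ^ k / (k.factorial * Gamma (k + ν + 1)) =
      (ν + 1) * (z ^ k / (k.factorial * Gamma (k + (ν + 1) + 1))) +
        k * z ^ k / (k.factorial * Gamma (k + (ν + 1) + 1)) := fun k => by
    rw [div_mul_eq_div_mul_one_div, one_div, inv_Gamma_eq_self_mul_inv_Gamma_add_one,
      ← add_assoc (k : ℝ)]
    ring
  have hsum := ((summable_besselClifford (ν + 1) z).hasSum.mul_left (ν + 1)).add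
    (hasSum_natCast_mul_besselClifford (ν + 1) z)
  rw [add_assoc ν 1 1, one_add_one_eq_two] at hsum
  exact (tsum_congr hterm).trans hsum.tsum_eq

/-! ### Differential equation and behaviour at the origin -/

lemma besselJ_eq_rpow_mul_besselClifford (ν : ℝ) {x : ℝ} (hx : 0 < x) :
    besselJ ν x = (x / 2) ^ ν * besselClifford ν (-(x ^ 2 / 4)) := by
  rw [besselJ, besselClifford, ← tsum_mul_left]
  refine tsum_congr fun k => ?_
  have hpow : (x / 2) ^ (2 * (k : ℝ) + ν) = (x / 2) ^ ν * (x ^ 2 / 4) ^ k := by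
    rw [rpow_add (by positivity), rpow_mul (by positivity), rpow_natCast, rpow_two, div_pow,
      mul_comm]
    norm_num
  rw [hpow, neg_pow (x ^ 2 / 4)]
  ring

/-- The Euler derivative `x J_ν'(x)` of the Bessel function `J_ν`, for `x > 0`. -/
noncomputable def eulerDerivBesselJ (ν x : ℝ) : ℝ := ν * besselJ ν x - x * besselJ (ν + 1) x

lemma hasDerivAt_besselJ (ν : ℝ) {x : ℝ} (hx : 0 < x) :
    HasDerivAt (besselJ ν) (eulerDerivBesselJ ν x / x) x := by
  have hpow : HasDerivAt (fun y : ℝ => (y / 2) ^ ν) (1 / 2 * ν * (x / 2) ^ (ν - 1)) x :=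
    ((hasDerivAt_id' x).div_const 2).rpow_const (.inl (by positivity))
  have hsq : HasDerivAt (fun y : ℝ => -(y ^ 2 / 4)) (-(x / 2)) x :=
    (((hasDerivAt_pow 2 x).div_const 4).neg).congr_deriv (by ring)
  have hprod := hpow.mul ((hasDerivAt_besselClifford ν _).comp x hsq)
  refine (hprod.congr_of_eventuallyEq ?_).congr_deriv ?_
  · filter_upwards [lt_mem_nhds hx] with y hy
    exact besselJ_eq_rpow_mul_besselClifford ν hy
  · rw [eulerDerivBesselJ, besselJ_eq_rpow_mul_besselClifford ν hx,
      besselJ_eq_rpow_mul_besselClifford (ν + 1) hx, rpow_add_one (by positivity),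
      rpow_sub_one (by positivity)]
    simp only [Function.comp_apply]
    field

lemma mul_besselJ_add_besselJ_add_two (ν : ℝ) {x : ℝ} (hx : 0 < x) :
    x * (besselJ ν x + besselJ (ν + 2) x) = 2 * (ν + 1) * besselJ (ν + 1) x := by
  have hx2 : x / 2 ≠ 0 := by positivity
  rw [besselJ_eq_rpow_mul_besselClifford ν hx, besselJ_eq_rpow_mul_besselClifford (ν + 1) hx,
    besselJ_eq_rpow_mul_besselClifford (ν + 2) hx, besselClifford_eq_add ν, rpow_add_one hx2,
    rpow_add (by positivity) ν 2, rpow_two]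
  ring

lemma hasDerivAt_eulerDerivBesselJ (ν : ℝ) {x : ℝ} (hx : 0 < x) :
    HasDerivAt (eulerDerivBesselJ ν) ((ν ^ 2 - x ^ 2) * besselJ ν x / x) x := by
  refine (((hasDerivAt_besselJ ν hx).const_mul ν).sub
    ((hasDerivAt_id' x).mul (hasDerivAt_besselJ (ν + 1) hx))).congr_deriv ?_
  rw [eulerDerivBesselJ, eulerDerivBesselJ, add_assoc, one_add_one_eq_two]
  field_simp
  linear_combination x * mul_besselJ_add_besselJ_add_two ν hx

lemma tendsto_besselClifford_nhdsGT_zero (ν : ℝ) :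
    Tendsto (fun x : ℝ => besselClifford ν (-(x ^ 2 / 4))) (𝓝[>] 0) (𝓝 (Gamma (ν + 1))⁻¹) := by
  have hc : Continuous fun x : ℝ => besselClifford ν (-(x ^ 2 / 4)) :=
    (continuous_iff_continuousAt.2 fun z => (hasDerivAt_besselClifford ν z).continuousAt).comp
      (by fun_prop)
  simpa [besselClifford_zero] using (hc.tendsto 0).mono_left nhdsWithin_le_nhds

lemma eventually_besselJ_pos {ν : ℝ} (hν : -1 < ν) : ∀ᶠ x in 𝓝[>] 0, 0 < besselJ ν x := by
  have hΓ : 0 < (Gamma (ν + 1))⁻¹ := inv_pos.2 (Gamma_pos_of_pos (by linarith))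
  filter_upwards [(tendsto_besselClifford_nhdsGT_zero ν).eventually_const_lt hΓ,
    self_mem_nhdsWithin] with x hx hx0
  have hx0 : 0 < x := hx0
  rw [besselJ_eq_rpow_mul_besselClifford ν hx0]
  positivity

lemma tendsto_besselJ_nhdsGT_zero {ν : ℝ} (hν : 0 < ν) :
    Tendsto (besselJ ν) (𝓝[>] 0) (𝓝 0) := by
  have hpow : Tendsto (fun x : ℝ => (x / 2) ^ ν) (𝓝[>] 0) (𝓝 0) := by
    have hc : Continuous fun x : ℝ => (x / 2) ^ ν :=
      (continuous_id.div_const 2).rpow_const fun _ => .inr hν.le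
    simpa [zero_rpow hν.ne'] using (hc.tendsto 0).mono_left nhdsWithin_le_nhds
  have hprod := hpow.mul (tendsto_besselClifford_nhdsGT_zero ν)
  rw [zero_mul] at hprod
  refine hprod.congr' ?_
  filter_upwards [self_mem_nhdsWithin] with x hx
  exact (besselJ_eq_rpow_mul_besselClifford ν hx).symm

lemma tendsto_eulerDerivBesselJ_div_besselJ {ν : ℝ} (hν : -1 < ν) :
    Tendsto (fun x => eulerDerivBesselJ ν x / besselJ ν x) (𝓝[>] 0) (𝓝 ν) := by
  have hΓ : (Gamma (ν + 1))⁻¹ ≠ 0 := inv_ne_zero (Gamma_pos_of_pos (by linarith)).ne'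
  have hsq : Tendsto (fun x : ℝ => x ^ 2 / 2) (𝓝[>] 0) (𝓝 0) :=
    tendsto_nhdsWithin_of_tendsto_nhds (by
      simpa using (show Continuous fun x : ℝ => x ^ 2 / 2 by fun_prop).tendsto 0)
  have hlim := (hsq.mul ((tendsto_besselClifford_nhdsGT_zero (ν + 1)).div
    (tendsto_besselClifford_nhdsGT_zero ν) hΓ)).const_sub ν
  rw [zero_mul, sub_zero] at hlim
  refine hlim.congr' ?_
  filter_upwards [eventually_besselJ_pos hν, self_mem_nhdsWithin] with x hJ hx
  have hx : 0 < x := hx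
  have hx2 : x / 2 ≠ 0 := by positivity
  rw [besselJ_eq_rpow_mul_besselClifford ν hx] at hJ
  have hC := right_ne_zero_of_mul hJ.ne'
  rw [eulerDerivBesselJ, besselJ_eq_rpow_mul_besselClifford ν hx,
    besselJ_eq_rpow_mul_besselClifford (ν + 1) hx, rpow_add_one hx2]
  simp only [Pi.div_apply]
  field

/-! ### Sturm comparison -/

/-- `f` solves the equation `(x d/dx)² f = Q f` on `(0, ∞)`, and `g` is its Euler derivative
`x f'`. The second-order equation is encoded as a first-order system so that no junk derivatives
occur. -/
structure IsEulerSolution (Q f g : ℝ → ℝ) : Prop where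
  hasDerivAt {x : ℝ} : 0 < x → HasDerivAt f (g x / x) x
  hasDerivAt_euler {x : ℝ} : 0 < x → HasDerivAt g (Q x * f x / x) x

lemma isEulerSolution_besselJ (ν : ℝ) :
    IsEulerSolution (fun x => ν ^ 2 - x ^ 2) (besselJ ν) (eulerDerivBesselJ ν) :=
  ⟨hasDerivAt_besselJ ν, hasDerivAt_eulerDerivBesselJ ν⟩

section EulerSolution

variable {Q f g : ℝ → ℝ}

lemma IsEulerSolution.comp_mul_left (h : IsEulerSolution Q f g) {c : ℝ} (hc : 0 < c) :
    IsEulerSolution (fun x => Q (c * x)) (fun x => f (c * x)) (fun x => g (c * x)) where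
  hasDerivAt {x} hx := by
    have hcx : HasDerivAt (fun y => c * y) c x := by simpa using (hasDerivAt_id' x).const_mul c
    exact ((h.hasDerivAt (mul_pos hc hx)).comp x hcx).congr_deriv (by field)
  hasDerivAt_euler {x} hx := by
    have hcx : HasDerivAt (fun y => c * y) c x := by simpa using (hasDerivAt_id' x).const_mul c
    exact ((h.hasDerivAt_euler (mul_pos hc hx)).comp x hcx).congr_deriv (by field)

lemma IsEulerSolution.hasDerivAt_sturm (h : IsEulerSolution Q f g) (k : ℝ) {a x : ℝ} (ha : 0 < a)
    (hx : 0 < x) :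
    HasDerivAt (fun y => g y * sin (k * log (y / a)) - f y * (k * cos (k * log (y / a))))
      ((Q x + k ^ 2) * f x * sin (k * log (x / a)) / x) x := by
  have hθ : HasDerivAt (fun y => k * log (y / a)) (k / x) x :=
    ((((hasDerivAt_id' x).div_const a).log (by positivity)).const_mul k).congr_deriv (by field)
  exact (((h.hasDerivAt_euler hx).mul hθ.sin).sub
    ((h.hasDerivAt hx).mul (hθ.cos.const_mul k))).congr_deriv (by ring)

-- If `f` were positive, its Wronskian with `sin (k log (x / a))` would be nonincreasing, although
-- it is negative at `a` and positive at `a * exp (π / k)`.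
lemma IsEulerSolution.exists_nonpos (h : IsEulerSolution Q f g) {a k : ℝ} (ha : 0 < a) (hk : 0 < k)
    (hQ : ∀ x ∈ Icc a (a * exp (π / k)), Q x ≤ -k ^ 2) :
    ∃ x ∈ Icc a (a * exp (π / k)), f x ≤ 0 := by
  by_contra! hf
  have hab : a < a * exp (π / k) := lt_mul_of_one_lt_right ha (one_lt_exp_iff.2 (by positivity))
  have hderiv : ∀ x ∈ Icc a (a * exp (π / k)), HasDerivAt _ _ x := fun x hx =>
    h.hasDerivAt_sturm k ha (ha.trans_le hx.1)
  obtain ⟨c, hc, hslope⟩ := exists_hasDerivAt_eq_slope _ _ hab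
    (HasDerivAt.continuousOn hderiv) fun x hx => hderiv x (Ioo_subset_Icc_self hx)
  have hlog : k * log (a * exp (π / k) / a) = π := by
    rw [mul_div_cancel_left₀ _ ha.ne', log_exp, mul_div_cancel₀ _ hk.ne']
  have hsin : 0 ≤ sin (k * log (c / a)) := by
    have hca : 1 ≤ c / a := (one_le_div ha).2 hc.1.le
    refine sin_nonneg_of_nonneg_of_le_pi (mul_nonneg hk.le (log_nonneg hca)) (hlog ▸ ?_)
    have hc2 := hc.2.le
    gcongr
  have hc' := Ioo_subset_Icc_self hc
  have hle : (Q c + k ^ 2) * f c * sin (k * log (c / a)) / c ≤ 0 := by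
    refine div_nonpos_of_nonpos_of_nonneg (mul_nonpos_of_nonpos_of_nonneg
      (mul_nonpos_of_nonpos_of_nonneg ?_ (hf c hc').le) hsin) (ha.trans hc.1).le
    linarith [hQ c hc']
  refine hle.not_gt (hslope ▸ div_pos ?_ (sub_pos.2 hab))
  rw [hlog, div_self ha.ne', log_one, mul_zero, sin_pi, cos_pi, sin_zero, cos_zero]
  have hfa := mul_pos (hf a ⟨le_rfl, hab.le⟩) hk
  have hfb := mul_pos (hf _ ⟨hab.le, le_rfl⟩) hk
  linarith

end EulerSolution

/-! ### Comparison of three ground states -/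

/-- `f` is a solution of `(x d/dx)² f = Q f` that is positive on `(0, 1)`, vanishes at both ends,
and whose Euler logarithmic derivative `x f' / f` has a finite limit at `0`. -/
structure IsGroundState (Q f g : ℝ → ℝ) : Prop extends IsEulerSolution Q f g where
  pos {x : ℝ} : x ∈ Ioo 0 1 → 0 < f x
  map_one : f 1 = 0
  tendsto_zero : Tendsto f (𝓝[>] 0) (𝓝 0)
  exists_tendsto_div : ∃ l, Tendsto (fun x => g x / f x) (𝓝[>] 0) (𝓝 l)

namespace IsGroundState

section SingleState

variable {Q f g : ℝ → ℝ}

lemma tendsto_euler_zero (h : IsGroundState Q f g) : Tendsto g (𝓝[>] 0) (𝓝 0) := by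
  obtain ⟨l, hl⟩ := h.exists_tendsto_div
  have hprod := hl.mul h.tendsto_zero
  rw [mul_zero] at hprod
  refine hprod.congr' ?_
  filter_upwards [Ioo_mem_nhdsGT zero_lt_one] with x hx
  exact div_mul_cancel₀ _ (h.pos hx).ne'

lemma tendsto_one (h : IsGroundState Q f g) : Tendsto f (𝓝[<] 1) (𝓝 0) :=
  h.map_one ▸ (h.hasDerivAt one_pos).continuousAt.tendsto.mono_left nhdsWithin_le_nhds

lemma exists_euler_eq_zero (h : IsGroundState Q f g) : ∃ c ∈ Ioo (0 : ℝ) 1, g c = 0 := by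
  obtain ⟨c, hc, hgc⟩ := exists_hasDerivAt_eq_zero' zero_lt_one h.tendsto_zero h.tendsto_one
    fun x hx => h.hasDerivAt hx.1
  exact ⟨c, hc, (div_eq_zero_iff.1 hgc).resolve_right hc.1.ne'⟩

lemma potential_eq_zero_of_deriv_eq_zero (h : IsGroundState Q f g) {x : ℝ} (hx : x ∈ Ioo 0 1)
    (hzero : Q x * f x / x = 0) : Q x = 0 :=
  (mul_eq_zero.1 ((div_eq_zero_iff.1 hzero).resolve_right hx.1.ne')).resolve_right (h.pos hx).ne'

lemma exists_potential_eq_zero_of_euler_eq_zero (h : IsGroundState Q f g) {c : ℝ}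
    (hc : c ∈ Ioo 0 1) (hgc : g c = 0) : ∃ x ∈ Ioo 0 c, Q x = 0 := by
  have hlim : Tendsto g (𝓝[<] c) (𝓝 0) :=
    hgc ▸ (h.hasDerivAt_euler hc.1).continuousAt.tendsto.mono_left nhdsWithin_le_nhds
  obtain ⟨x, hx, hzero⟩ := exists_hasDerivAt_eq_zero' hc.1 h.tendsto_euler_zero hlim
    fun x hx => h.hasDerivAt_euler hx.1
  exact ⟨x, hx, h.potential_eq_zero_of_deriv_eq_zero ⟨hx.1, hx.2.trans hc.2⟩ hzero⟩

lemma exists_potential_eq_zero (h : IsGroundState Q f g) : ∃ x ∈ Ioo 0 1, Q x = 0 := by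
  obtain ⟨c, hc, hgc⟩ := h.exists_euler_eq_zero
  obtain ⟨x, hx, hQx⟩ := h.exists_potential_eq_zero_of_euler_eq_zero hc hgc
  exact ⟨x, ⟨hx.1, hx.2.trans hc.2⟩, hQx⟩

-- Otherwise `Q` would vanish on both sides of a critical point of `f`.
lemma euler_one_ne_zero (h : IsGroundState Q f g) (hQ : InjOn Q (Ioo 0 1)) : g 1 ≠ 0 := by
  intro hg1
  obtain ⟨c, hc, hgc⟩ := h.exists_euler_eq_zero
  obtain ⟨x, hx, hQx⟩ := h.exists_potential_eq_zero_of_euler_eq_zero hc hgc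
  obtain ⟨y, hy, hzero⟩ := exists_hasDerivAt_eq_zero hc.2
    (HasDerivAt.continuousOn fun z hz => h.hasDerivAt_euler (hc.1.trans_le hz.1))
    (hgc.trans hg1.symm) fun z hz => h.hasDerivAt_euler (hc.1.trans hz.1)
  have hx' : x ∈ Ioo 0 1 := ⟨hx.1, hx.2.trans hc.2⟩
  have hy' : y ∈ Ioo 0 1 := ⟨hc.1.trans hy.1, hy.2⟩
  have hQy := h.potential_eq_zero_of_deriv_eq_zero hy' hzero
  exact (hx.2.trans hy.1).ne (hQ hx' hy' (hQx.trans hQy.symm))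

lemma hasDerivAt_rpow (h : IsGroundState Q f g) (a : ℝ) {x : ℝ} (hx : x ∈ Ioo 0 1) :
    HasDerivAt (fun y => f y ^ a) (f x ^ a * (a * (g x / f x)) / x) x := by
  refine ((h.hasDerivAt hx.1).rpow_const (.inl (h.pos hx).ne')).congr_deriv ?_
  rw [rpow_sub_one (h.pos hx).ne']
  ring

lemma hasDerivAt_div (h : IsGroundState Q f g) {x : ℝ} (hx : x ∈ Ioo 0 1) :
    HasDerivAt (fun y => g y / f y) ((Q x - (g x / f x) ^ 2) / x) x := by
  have hf := (h.pos hx).ne'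
  have hx0 := hx.1.ne'
  exact ((h.hasDerivAt_euler hx.1).fun_div (h.hasDerivAt hx.1) hf).congr_deriv (by field)

lemma tendsto_div_one_sub (h : IsGroundState Q f g) :
    Tendsto (fun x => f x / (x - 1)) (𝓝[<] 1) (𝓝 (g 1)) := by
  have hslope := hasDerivAt_iff_tendsto_slope.1 (h.hasDerivAt one_pos)
  rw [div_one] at hslope
  refine (hslope.mono_left (nhdsWithin_mono _ fun x hx => ne_of_lt hx)).congr fun x => ?_
  rw [slope_def_field, h.map_one, sub_zero]

end SingleState

/-- The Wronskian `u * x f₁' - f₁ * x u'` of `f₁` and the weighted geometric mean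
`u = f₀ ^ a * f₂ ^ b`, where `gᵢ = x fᵢ'`. -/
noncomputable def geomMeanWronskian (a b : ℝ) (f₀ g₀ f₁ g₁ f₂ g₂ : ℝ → ℝ) (x : ℝ) : ℝ :=
  f₀ x ^ a * f₂ x ^ b * (g₁ x - f₁ x * (a * (g₀ x / f₀ x) + b * (g₂ x / f₂ x)))

variable {Q₀ f₀ g₀ Q₁ f₁ g₁ Q₂ f₂ g₂ : ℝ → ℝ} {a b : ℝ}

lemma tendsto_div_nhdsLT_one (h₁ : IsGroundState Q₁ f₁ g₁) (h₀ : IsGroundState Q₀ f₀ g₀)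
    (hg₀ : g₀ 1 ≠ 0) : Tendsto (fun x => f₁ x / f₀ x) (𝓝[<] 1) (𝓝 (g₁ 1 / g₀ 1)) := by
  refine (h₁.tendsto_div_one_sub.div h₀.tendsto_div_one_sub hg₀).congr' ?_
  filter_upwards [self_mem_nhdsWithin] with x hx
  exact div_div_div_cancel_right₀ (sub_ne_zero.2 (ne_of_lt hx)) _ _

lemma hasDerivAt_geomMeanWronskian (h₀ : IsGroundState Q₀ f₀ g₀) (h₁ : IsEulerSolution Q₁ f₁ g₁)
    (h₂ : IsGroundState Q₂ f₂ g₂) (hab : a + b = 1) {x : ℝ} (hx : x ∈ Ioo 0 1) :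
    HasDerivAt (geomMeanWronskian a b f₀ g₀ f₁ g₁ f₂ g₂)
      (f₀ x ^ a * f₂ x ^ b * f₁ x *
        (Q₁ x - (a * Q₀ x + b * Q₂ x) + a * b * (g₀ x / f₀ x - g₂ x / f₂ x) ^ 2) / x) x := by
  obtain rfl : b = 1 - a := by linarith
  have hmean := (h₀.hasDerivAt_rpow a hx).fun_mul (h₂.hasDerivAt_rpow (1 - a) hx)
  have hlog := ((h₀.hasDerivAt_div hx).const_mul a).fun_add
    ((h₂.hasDerivAt_div hx).const_mul (1 - a))
  exact (hmean.fun_mul ((h₁.hasDerivAt_euler hx.1).fun_sub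
    ((h₁.hasDerivAt hx.1).fun_mul hlog))).congr_deriv (by ring)

lemma tendsto_geomMeanWronskian_nhdsGT_zero (h₀ : IsGroundState Q₀ f₀ g₀)
    (h₁ : IsGroundState Q₁ f₁ g₁) (h₂ : IsGroundState Q₂ f₂ g₂) (ha : 0 ≤ a) (hb : 0 ≤ b) :
    Tendsto (geomMeanWronskian a b f₀ g₀ f₁ g₁ f₂ g₂) (𝓝[>] 0) (𝓝 0) := by
  obtain ⟨l₀, hl₀⟩ := h₀.exists_tendsto_div
  obtain ⟨l₂, hl₂⟩ := h₂.exists_tendsto_div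
  have hmean := (h₀.tendsto_zero.rpow_const (.inr ha)).mul (h₂.tendsto_zero.rpow_const (.inr hb))
  have hlog := (hl₀.const_mul a).add (hl₂.const_mul b)
  have hlim := hmean.mul (h₁.tendsto_euler_zero.sub (h₁.tendsto_zero.mul hlog))
  rwa [zero_mul, sub_zero, mul_zero] at hlim

-- Near `1` all three functions are asymptotically proportional, which makes the bracket vanish in
-- the limit since `a + b = 1`.
lemma tendsto_geomMeanWronskian_nhdsLT_one (h₀ : IsGroundState Q₀ f₀ g₀)
    (h₁ : IsGroundState Q₁ f₁ g₁) (h₂ : IsGroundState Q₂ f₂ g₂) (hg₀ : g₀ 1 ≠ 0) (hg₂ : g₂ 1 ≠ 0)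
    (ha : 0 ≤ a) (hb : 0 ≤ b) (hab : a + b = 1) :
    Tendsto (geomMeanWronskian a b f₀ g₀ f₁ g₁ f₂ g₂) (𝓝[<] 1) (𝓝 0) := by
  have hg : ∀ {Q f g}, IsGroundState Q f g → Tendsto g (𝓝[<] 1) (𝓝 (g 1)) := fun h =>
    (h.hasDerivAt_euler one_pos).continuousAt.tendsto.mono_left nhdsWithin_le_nhds
  have hmean := (h₀.tendsto_one.rpow_const (.inr ha)).mul (h₂.tendsto_one.rpow_const (.inr hb))
  have hlog := (((h₁.tendsto_div_nhdsLT_one h₀ hg₀).mul (hg h₀)).const_mul a).add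
    (((h₁.tendsto_div_nhdsLT_one h₂ hg₂).mul (hg h₂)).const_mul b)
  rw [div_mul_cancel₀ _ hg₀, div_mul_cancel₀ _ hg₂, ← add_mul, hab, one_mul] at hlog
  have hlim := hmean.mul ((hg h₁).sub hlog)
  rw [sub_self, mul_zero] at hlim
  refine hlim.congr fun x => ?_
  rw [geomMeanWronskian]
  ring

theorem exists_potential_le (h₀ : IsGroundState Q₀ f₀ g₀) (h₁ : IsGroundState Q₁ f₁ g₁)
    (h₂ : IsGroundState Q₂ f₂ g₂) (hg₀ : g₀ 1 ≠ 0) (hg₂ : g₂ 1 ≠ 0) (ha : 0 ≤ a) (hb : 0 ≤ b)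
    (hab : a + b = 1) : ∃ x ∈ Ioo 0 1, Q₁ x ≤ a * Q₀ x + b * Q₂ x := by
  obtain ⟨x, hx, hzero⟩ := exists_hasDerivAt_eq_zero' zero_lt_one
    (h₀.tendsto_geomMeanWronskian_nhdsGT_zero h₁ h₂ ha hb)
    (h₀.tendsto_geomMeanWronskian_nhdsLT_one h₁ h₂ hg₀ hg₂ ha hb hab)
    fun x hx => h₀.hasDerivAt_geomMeanWronskian h₁.toIsEulerSolution h₂ hab hx
  refine ⟨x, hx, not_lt.1 fun hlt => hzero.not_gt ?_⟩
  have hf₀ := h₀.pos hx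
  have hf₁ := h₁.pos hx
  have hf₂ := h₂.pos hx
  have := sub_pos.2 hlt
  have hx0 := hx.1
  positivity

end IsGroundState

/-! ### The first positive zero -/

lemma exists_first_zero {f : ℝ → ℝ} (hf : ContinuousOn f (Ioi 0))
    (hpos : ∀ᶠ x in 𝓝[>] 0, 0 < f x) {x₀ : ℝ} (hx₀ : 0 < x₀) (hfx₀ : f x₀ ≤ 0) :
    ∃ r ∈ Ioc 0 x₀, f r = 0 ∧ ∀ x ∈ Ioo 0 r, 0 < f x := by
  obtain ⟨u, hu, hfu⟩ := mem_nhdsGT_iff_exists_Ioo_subset.1 hpos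
  have hux₀ : u ≤ x₀ := not_lt.1 fun h => hfx₀.not_gt (hfu ⟨hx₀, h⟩)
  have hcompact : IsCompact (Icc u x₀ ∩ f ⁻¹' Iic 0) :=
    isCompact_Icc.of_isClosed_subset ((hf.mono fun x hx => lt_of_lt_of_le hu hx.1)
      |>.preimage_isClosed_of_isClosed isClosed_Icc isClosed_Iic) inter_subset_left
  obtain ⟨r, ⟨⟨hur, hrx₀⟩, hfr⟩, hmin⟩ := hcompact.exists_isLeast ⟨x₀, ⟨hux₀, le_rfl⟩, hfx₀⟩
  have hr : 0 < r := lt_of_lt_of_le hu hur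
  have hleft : ∀ x ∈ Ioo 0 r, 0 < f x := fun x hx => by
    rcases lt_or_ge x u with hxu | hux
    · exact hfu ⟨hx.1, hxu⟩
    · exact not_le.1 fun hfx => (hmin ⟨⟨hux, hx.2.le.trans hrx₀⟩, hfx⟩).not_gt hx.2
  refine ⟨r, ⟨hr, hrx₀⟩, le_antisymm hfr ?_, hleft⟩
  have hlim := (hf.continuousAt (Ioi_mem_nhds hr)).tendsto.mono_left
    (nhdsWithin_le_nhds (s := Iio r))
  refine ge_of_tendsto hlim ?_
  filter_upwards [Ioo_mem_nhdsLT hr] with x hx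
  exact (hleft x hx).le

lemma exists_besselJ_nonpos {ν k a : ℝ} (hk : 0 < k) (ha : 0 < a) (h : ν ^ 2 + k ^ 2 ≤ a ^ 2) :
    ∃ x ∈ Icc a (a * exp (π / k)), besselJ ν x ≤ 0 := by
  refine (isEulerSolution_besselJ ν).exists_nonpos ha hk fun x hx => ?_
  have hax : a ^ 2 ≤ x ^ 2 := pow_le_pow_left₀ ha.le hx.1 2
  linarith

lemma besselJZero1_spec_of_nonpos {ν x : ℝ} (hν : -1 < ν) (hx : 0 < x) (hJ : besselJ ν x ≤ 0) :
    besselJZero1 ν ∈ Ioc 0 x ∧ besselJ ν (besselJZero1 ν) = 0 ∧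
      ∀ y ∈ Ioo 0 (besselJZero1 ν), 0 < besselJ ν y := by
  obtain ⟨r, hr, hJr, hpos⟩ := exists_first_zero
    (HasDerivAt.continuousOn fun y hy => hasDerivAt_besselJ ν hy) (eventually_besselJ_pos hν) hx hJ
  have hleast : IsLeast {y | 0 < y ∧ besselJ ν y = 0} r :=
    ⟨⟨hr.1, hJr⟩, fun y hy => not_lt.1 fun hyr => (hpos y ⟨hy.1, hyr⟩).ne' hy.2⟩
  rw [besselJZero1, hleast.csInf_eq]
  exact ⟨hr, hJr, hpos⟩

lemma besselJZero1_le {ν k a : ℝ} (hν : -1 < ν) (hk : 0 < k) (ha : 0 < a)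
    (h : ν ^ 2 + k ^ 2 ≤ a ^ 2) : besselJZero1 ν ≤ a * exp (π / k) := by
  obtain ⟨x, hx, hJ⟩ := exists_besselJ_nonpos hk ha h
  exact (besselJZero1_spec_of_nonpos hν (ha.trans_le hx.1) hJ).1.2.trans hx.2

lemma besselJZero1_spec {ν : ℝ} (hν : -1 < ν) :
    0 < besselJZero1 ν ∧ besselJ ν (besselJZero1 ν) = 0 ∧
      ∀ y ∈ Ioo 0 (besselJZero1 ν), 0 < besselJ ν y := by
  have hsq : ν ^ 2 + 1 ^ 2 ≤ (|ν| + 1) ^ 2 := by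
    nlinarith [sq_abs ν, abs_nonneg ν]
  obtain ⟨x, hx, hJ⟩ := exists_besselJ_nonpos one_pos (by positivity) hsq
  have hx0 : 0 < x := lt_of_lt_of_le (by positivity) hx.1
  exact (besselJZero1_spec_of_nonpos hν hx0 hJ).imp_left And.left

lemma besselJZero1_pos {ν : ℝ} (hν : -1 < ν) : 0 < besselJZero1 ν :=
  (besselJZero1_spec hν).1

lemma isGroundState_besselJ {ν : ℝ} (hν : 0 < ν) :
    IsGroundState (fun x => ν ^ 2 - (besselJZero1 ν * x) ^ 2)
      (fun x => besselJ ν (besselJZero1 ν * x))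
      (fun x => eulerDerivBesselJ ν (besselJZero1 ν * x)) := by
  have hν' : -1 < ν := by linarith
  obtain ⟨hj, hzero, hpos⟩ := besselJZero1_spec hν'
  have hscale : Tendsto (besselJZero1 ν * ·) (𝓝[>] 0) (𝓝[>] 0) := by
    conv_lhs => rw [← comap_mulLeft_nhdsGT_zero hj]
    exact tendsto_comap
  exact
    { toIsEulerSolution := (isEulerSolution_besselJ ν).comp_mul_left hj
      pos := fun hx => hpos _ ⟨mul_pos hj hx.1, mul_lt_of_lt_one_right hj hx.2⟩
      map_one := by rw [mul_one, hzero]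
      tendsto_zero := (tendsto_besselJ_nhdsGT_zero hν).comp hscale
      exists_tendsto_div := ⟨ν, (tendsto_eulerDerivBesselJ_div_besselJ hν').comp hscale⟩ }

lemma injOn_sub_sq_mul (q : ℝ) {c : ℝ} (hc : 0 < c) :
    InjOn (fun x => q - (c * x) ^ 2) (Ioo 0 1) := fun x hx y hy hxy => by
  have hsq : (c * x) ^ 2 = (c * y) ^ 2 := sub_right_injective hxy
  exact mul_left_cancel₀ hc.ne' ((pow_left_inj₀ (mul_pos hc hx.1).le (mul_pos hc hy.1).le
    two_ne_zero).1 hsq)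

lemma eulerDerivBesselJ_besselJZero1_ne_zero {ν : ℝ} (hν : 0 < ν) :
    eulerDerivBesselJ ν (besselJZero1 ν * 1) ≠ 0 :=
  (isGroundState_besselJ hν).euler_one_ne_zero
    (injOn_sub_sq_mul _ (besselJZero1_pos (by linarith)))

lemma lt_besselJZero1 {ν : ℝ} (hν : 0 < ν) : ν < besselJZero1 ν := by
  obtain ⟨x, hx, hzero⟩ := (isGroundState_besselJ hν).exists_potential_eq_zero
  have hj := besselJZero1_pos (by linarith : -1 < ν)
  have hνx : ν = besselJZero1 ν * x :=
    (pow_left_inj₀ hν.le (mul_pos hj hx.1).le two_ne_zero).1 (sub_eq_zero.1 hzero)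
  exact hνx.trans_lt (mul_lt_of_lt_one_right hj hx.2)

theorem concaveOn_besselJZero1_sqrt_sq :
    ConcaveOn ℝ (Ioi 0) fun t => besselJZero1 √t ^ 2 := by
  refine ⟨convex_Ioi 0, fun s hs t ht a b ha hb hab => ?_⟩
  have hst : 0 < a * s + b * t := convex_Ioi 0 hs ht ha hb hab
  obtain ⟨x, hx, hle⟩ := (isGroundState_besselJ (sqrt_pos.2 hs)).exists_potential_le
    (isGroundState_besselJ (sqrt_pos.2 hst)) (isGroundState_besselJ (sqrt_pos.2 ht))
    (eulerDerivBesselJ_besselJZero1_ne_zero (sqrt_pos.2 hs))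
    (eulerDerivBesselJ_besselJZero1_ne_zero (sqrt_pos.2 ht)) ha hb hab
  rw [sq_sqrt (le_of_lt hs), sq_sqrt (le_of_lt ht), sq_sqrt hst.le] at hle
  simp only [smul_eq_mul]
  refine le_of_mul_le_mul_right ?_ (pow_pos hx.1 2)
  linear_combination hle

/-! ### Asymptotics of the first zero -/

lemma tendsto_besselJZero1_div_self : Tendsto (fun ν => besselJZero1 ν / ν) atTop (𝓝 1) := by
  have hupper : Tendsto (fun ν : ℝ => √(1 + ν⁻¹) * exp (π / √ν)) atTop (𝓝 1) := by
    have hsqrt := (tendsto_inv_atTop_zero (𝕜 := ℝ)).const_add 1 |>.sqrt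
    have hexp := (continuous_exp.tendsto 0).comp (tendsto_sqrt_atTop.const_div_atTop π)
    simpa using hsqrt.mul hexp
  refine tendsto_of_tendsto_of_tendsto_of_le_of_le' tendsto_const_nhds hupper ?_ ?_
  all_goals filter_upwards [eventually_gt_atTop 0] with ν hν
  · exact (one_le_div hν).2 (lt_besselJZero1 hν).le
  · have hsq : ν ^ 2 + √ν ^ 2 ≤ (ν * √(1 + ν⁻¹)) ^ 2 := by
      rw [mul_pow, sq_sqrt hν.le, sq_sqrt (by positivity)]
      exact le_of_eq (by field)
    rw [div_le_iff₀' hν, ← mul_assoc]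
    exact besselJZero1_le (by linarith) (sqrt_pos.2 hν) (by positivity) hsq

lemma tendsto_besselJZero1_add_div_add (a b : ℝ) :
    Tendsto (fun ν => besselJZero1 (ν + a) / (ν + b)) atTop (𝓝 1) := by
  have hshift : Tendsto (fun ν => ν + a) atTop atTop :=
    tendsto_atTop_add_const_right _ a tendsto_id
  have hprod := (tendsto_besselJZero1_div_self.comp hshift).mul (tendsto_add_div_add_atTop a b)
  rw [mul_one] at hprod
  refine hprod.congr' ?_
  filter_upwards [hshift.eventually_ne_atTop 0] with ν hν
  rw [Function.comp_apply, div_mul_div_cancel₀ hν]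

lemma tendsto_besselJZero1_add_sub {h : ℝ} (hh : 0 < h) :
    Tendsto (fun ν => besselJZero1 (ν + h) - besselJZero1 ν) atTop (𝓝 h) := by
  have hsq : Tendsto (fun t => besselJZero1 √t ^ 2 / t) atTop (𝓝 1) := by
    have hlim := (tendsto_besselJZero1_div_self.comp tendsto_sqrt_atTop).pow 2
    rw [one_pow] at hlim
    refine hlim.congr' ?_
    filter_upwards [eventually_ge_atTop 0] with t ht
    rw [Function.comp_apply, div_pow, sq_sqrt ht]
  have hslope := tendsto_slope_of_concaveOn concaveOn_besselJZero1_sqrt_sq hsq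
    (tendsto_pow_atTop (two_ne_zero)) (t := fun ν => (ν + h) ^ 2) (by
      filter_upwards [eventually_ge_atTop 0] with ν hν
      gcongr
      linarith)
  have hsum := (tendsto_besselJZero1_add_div_add h (h / 2)).add
    (tendsto_besselJZero1_add_div_add 0 (h / 2))
  have hlim := (hslope.mul_const (2 * h)).div hsum (by norm_num)
  rw [one_mul, one_add_one_eq_two, mul_div_cancel_left₀ _ two_ne_zero] at hlim
  refine hlim.congr' ?_
  filter_upwards [eventually_gt_atTop 0] with ν hν
  have hj₀ : 0 < besselJZero1 ν := besselJZero1_pos (by linarith)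
  have hj₁ : 0 < besselJZero1 (ν + h) := besselJZero1_pos (by linarith)
  rw [Pi.div_apply, slope_def_field, sqrt_sq hν.le, sqrt_sq (by positivity), add_zero,
    add_sq, add_assoc, add_sub_cancel_left]
  field

lemma tendsto_besselJZero1_div_add_self (h : ℝ) :
    Tendsto (fun ν => besselJZero1 ν / besselJZero1 (ν + h)) atTop (𝓝 1) := by
  have hlim := tendsto_besselJZero1_div_self.div (tendsto_besselJZero1_add_div_add h 0) one_ne_zero
  rw [div_one] at hlim
  refine hlim.congr' ?_
  filter_upwards [eventually_ne_atTop 0] with ν hν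
  rw [Pi.div_apply, add_zero, div_div_div_cancel_right₀ hν]

lemma tendsto_besselJZero1_div_add_rpow_self {h : ℝ} (hh : 0 < h) :
    Tendsto (fun ν => (besselJZero1 ν / besselJZero1 (ν + h)) ^ ν) atTop (𝓝 (exp (-h))) := by
  have hlim := (tendsto_besselJZero1_add_sub hh).neg.div (tendsto_besselJZero1_add_div_add h 0)
    one_ne_zero
  rw [div_one] at hlim
  have hmul : Tendsto (fun ν => ν * (besselJZero1 ν / besselJZero1 (ν + h) - 1)) atTop
      (𝓝 (-h)) := by
    refine hlim.congr' ?_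
    filter_upwards [eventually_gt_atTop 0] with ν hν
    have hj : 0 < besselJZero1 (ν + h) := besselJZero1_pos (by linarith)
    rw [Pi.div_apply, add_zero]
    field
  simpa only [add_sub_cancel] using tendsto_one_add_rpow_exp_of_tendsto hmul

lemma tendsto_besselJZero1_div_add_rpow {h : ℝ} (hh : 0 < h) (a b : ℝ) :
    Tendsto (fun ν => (besselJZero1 ν / besselJZero1 (ν + h)) ^ (ν * a + b)) atTop
      (𝓝 (exp (-(h * a)))) := by
  have hlim := ((tendsto_besselJZero1_div_add_rpow_self hh).rpow_const (p := a)
    (.inl (exp_ne_zero _))).mul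
      ((tendsto_besselJZero1_div_add_self h).rpow_const (p := b) (.inl one_ne_zero))
  rw [one_rpow, mul_one, ← exp_mul, neg_mul] at hlim
  refine hlim.congr' ?_
  filter_upwards [eventually_gt_atTop 0] with ν hν
  have hr : 0 < besselJZero1 ν / besselJZero1 (ν + h) :=
    div_pos (besselJZero1_pos (by linarith)) (besselJZero1_pos (by linarith))
  rw [rpow_add hr, rpow_mul hr.le]

/-! ### Quotients of Pleijel constants -/

lemma pleijelGamma_succ_div {d : ℕ} (hd : d ≠ 0) :
    pleijelGamma (d + 1) / pleijelGamma d =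
      2 * (1 + 1 / d) ^ 2 *
        (Gamma (d / 2 + 1 / 2) / ((d / 2) ^ (1 / 2 : ℝ) * Gamma (d / 2))) ^ 2 *
        (besselJZero1 (d / 2 - 1 + 1 / 2) / (d / 2))⁻¹ *
        (besselJZero1 (d / 2 - 1) / besselJZero1 (d / 2 - 1 + 1 / 2)) ^ (d : ℝ) := by
  have hd0 : (0 : ℝ) < d := by positivity
  have hj₀ : 0 < besselJZero1 (d / 2 - 1) := besselJZero1_pos (by linarith)
  have hj₁ : 0 < besselJZero1 (d / 2 - 1 + 1 / 2) := besselJZero1_pos (by linarith)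
  have : 0 < Gamma (d / 2) := Gamma_pos_of_pos (by positivity)
  have hdim : ((d + 1 : ℕ) : ℝ) / 2 = d / 2 + 1 / 2 := by rw [Nat.cast_succ, add_div]
  have htwo : (2 : ℝ) ^ (((d + 1 : ℕ) : ℝ) - 2) = 2 * 2 ^ ((d : ℝ) - 2) := by
    rw [Nat.cast_succ, add_sub_right_comm, rpow_add_one two_ne_zero, mul_comm]
  have hsqrt : (((d : ℝ) / 2) ^ (1 / 2 : ℝ)) ^ 2 = d / 2 := by
    rw [← sqrt_eq_rpow, sq_sqrt (by positivity)]
  rw [pleijelGamma, pleijelGamma, hdim, htwo, add_sub_right_comm, rpow_natCast, rpow_natCast,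
    rpow_natCast, div_pow _ _ 2, mul_pow _ _ 2, hsqrt, Nat.cast_succ]
  generalize besselJZero1 (d / 2 - 1) = j₀ at hj₀ ⊢
  generalize besselJZero1 (d / 2 - 1 + 1 / 2) = j₁ at hj₁ ⊢
  rw [div_pow j₀]
  field

theorem pleijelGamma_quotient_tendsto :
    Filter.Tendsto (fun d : ℕ => pleijelGamma (d + 1) / pleijelGamma d)
      Filter.atTop (nhds (2 / Real.exp 1)) := by
  have hdim : Tendsto (fun d : ℕ => (d : ℝ) / 2) atTop atTop :=
    tendsto_natCast_atTop_atTop.atTop_div_const two_pos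
  have horder : Tendsto (fun d : ℕ => (d : ℝ) / 2 - 1) atTop atTop :=
    tendsto_atTop_add_const_right _ (-1) hdim
  have hsq := (tendsto_one_div_atTop_nhds_zero_nat (𝕜 := ℝ)).const_add 1 |>.pow 2
  have hGamma := (tendsto_Gamma_add_div_rpow_mul_Gamma (s := 1 / 2) (by norm_num)).comp hdim
  have hzero := (tendsto_besselJZero1_add_div_add (1 / 2) 1).comp horder
  have hpow := (tendsto_besselJZero1_div_add_rpow (h := 1 / 2) (by norm_num) 2 2).comp horder
  have hlim := (((hsq.const_mul 2).mul (hGamma.pow 2)).mul (hzero.inv₀ one_ne_zero)).mul hpow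
  have hvalue : 2 * (1 + 0) ^ 2 * 1 ^ 2 * 1⁻¹ * exp (-(1 / 2 * 2)) = 2 / exp 1 := by
    norm_num [exp_neg, div_eq_mul_inv]
  rw [← hvalue]
  refine hlim.congr' ?_
  filter_upwards [eventually_ne_atTop 0] with d hd
  have hexp : ((d : ℝ) / 2 - 1) * 2 + 2 = d := by ring
  rw [pleijelGamma_succ_div hd]
  simp only [Function.comp_apply, sub_add_cancel, hexp]
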